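/- Let n ≥ 2 be an integer, δ ∈ (0,1], let d ≥ 1 and q ≥ 0 be integers, β ≥ 1, α1 ∈ (0,1) and α2 > 0. Let x ∈ {0,1}^n and let ρ_1,…,ρ_n be reals with |ρ_j| ≤ (q+1)·β·n^q for every j. Let γ ≥ 6(d+1)(q+1)β/(α1²·α2), let r = ⌈γ·n^{1−δ}·ln n⌉, and let R_1,…,R_r be drawn independently and uniformly at random (with replacement) from {1,…,n}. Set ρ = (n/r)·Σ_{l=1}^r ρ_{R_l}·x_{R_l}, ρ̂ = Σ_{j=1}^n ρ_j·x_j, and ρ̄ = Σ_{j=1}^n |ρ_j|. Then with probability at least 1 − 4/n^{d+1}: ρ̂ − α1·ρ̄ − 2·α2·n^{q+δ} ≤ ρ ≤ ρ̂ + α1·ρ̄ + 2·α2·n^{q+δ}. -/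

import Mathlib

/-- Exponential Markov inequality for a uniform random sequence `R : Fin r → ι`. -/
theorem card_filter_mul_exp_le_sum_exp_pow {ι : Type*} [Fintype ι] (r : ℕ) (b : ι → ℝ) (T : ℝ)
    (P : (Fin r → ι) → Prop) [DecidablePred P] (hP : ∀ R, P R → T ≤ ∑ l, b (R l)) :
    ((Finset.univ.filter P).card : ℝ) * Real.exp T ≤ (∑ j, Real.exp (b j)) ^ r := by
  classical
  rw [Fintype.sum_pow, ← nsmul_eq_mul, ← Finset.sum_const]
  calc ∑ _R ∈ Finset.univ.filter P, Real.exp T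
      ≤ ∑ R ∈ Finset.univ.filter P, ∏ l, Real.exp (b (R l)) := by
        refine Finset.sum_le_sum fun R hR => ?_
        rw [← Real.exp_sum]
        exact Real.exp_le_exp.2 (hP R (Finset.mem_filter.1 hR).2)
    _ ≤ ∑ R : Fin r → ι, ∏ l, Real.exp (b (R l)) :=
        Finset.sum_le_sum_of_subset_of_nonneg (Finset.filter_subset _ _) fun R _ _ =>
          Finset.prod_nonneg fun l _ => (Real.exp_pos _).le

/-- Moment generating function bound for a bounded function of a uniform index. -/
theorem sum_exp_mul_le {n : ℕ} (hn : 0 < n) (b : Fin n → ℝ) {M W t : ℝ} (ht : 0 ≤ t)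
    (htM : t * M ≤ 1) (hM : 0 ≤ M) (hb : ∀ j, |b j| ≤ M) (hW : ∑ j, |b j| ≤ W) :
    ∑ j, Real.exp (t * b j) ≤ n * Real.exp ((t * ∑ j, b j + t ^ 2 * M * W) / n) := by
  have hn' : (0 : ℝ) < n := by exact_mod_cast hn
  have h1 : ∀ j, Real.exp (t * b j) ≤ 1 + t * b j + t ^ 2 * M * |b j| := by
    intro j
    have h : |t * b j| ≤ 1 := by
      rw [abs_mul, abs_of_nonneg ht]
      exact (mul_le_mul_of_nonneg_left (hb j) ht).trans htM
    have h2 := (abs_le.1 (Real.abs_exp_sub_one_sub_id_le h)).2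
    have h3 : (b j) ^ 2 ≤ M * |b j| := by
      rw [← sq_abs, sq]
      exact mul_le_mul_of_nonneg_right (hb j) (abs_nonneg _)
    have h4 := mul_le_mul_of_nonneg_left h3 (sq_nonneg t)
    nlinarith
  calc ∑ j, Real.exp (t * b j) ≤ ∑ j, (1 + t * b j + t ^ 2 * M * |b j|) :=
        Finset.sum_le_sum fun j _ => h1 j
    _ = n + t * ∑ j, b j + t ^ 2 * M * ∑ j, |b j| := by
        simp [Finset.sum_add_distrib, Finset.mul_sum]
    _ ≤ n + t * ∑ j, b j + t ^ 2 * M * W := by gcongr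
    _ = n * ((t * ∑ j, b j + t ^ 2 * M * W) / n + 1) := by field_simp; ring
    _ ≤ _ := by gcongr; exact Real.add_one_le_exp _

/-- Upper tail bound for the sampling estimator of `∑ j, b j`. -/
theorem card_filter_le_sample_sum_le {n r : ℕ} (hn : 0 < n) (hr : 0 < r) (b : Fin n → ℝ)
    {M W α U : ℝ} (hα : 0 ≤ α) (hα1 : α ≤ 1) (hM : 0 < M) (hb : ∀ j, |b j| ≤ M)
    (hW : ∑ j, |b j| ≤ W) (P : (Fin r → Fin n) → Prop) [DecidablePred P]
    (hP : ∀ R, P R → (∑ j, b j) + α * W + U ≤ ((n : ℝ) / r) * ∑ l, b (R l)) :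
    ((Finset.univ.filter P).card : ℝ) ≤ (n : ℝ) ^ r * Real.exp (-(r * α * U / (n * M))) := by
  have hn' : (0 : ℝ) < n := by exact_mod_cast hn
  have hr' : (0 : ℝ) < r := by exact_mod_cast hr
  set t := α / M with ht
  set S := ∑ j, b j with hS
  have h1 := card_filter_mul_exp_le_sum_exp_pow r (fun j => t * b j)
    (t * (r / n * (S + α * W + U))) P (by
      intro R hR
      rw [← Finset.mul_sum]
      refine mul_le_mul_of_nonneg_left ?_ (by positivity)
      calc (r : ℝ) / n * (S + α * W + U) ≤ r / n * ((n : ℝ) / r * ∑ l, b (R l)) := by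
            gcongr; exact hP R hR
        _ = ∑ l, b (R l) := by field_simp)
  have h2 := sum_exp_mul_le hn b (t := t) (by positivity)
    (by rw [ht, div_mul_cancel₀ _ hM.ne']; exact hα1) hM.le hb hW
  have h3 := h1.trans (pow_le_pow_left₀
    (Finset.sum_nonneg fun j _ => (Real.exp_pos _).le) h2 r)
  rw [mul_pow, ← Real.exp_nat_mul, ← le_div_iff₀ (Real.exp_pos _), mul_div_assoc,
    ← Real.exp_sub] at h3
  refine h3.trans_eq ?_
  congr 2
  rw [ht]
  field_simp
  ring


open Classical in
/-- Sampling lemma (general, signed coefficients): with a sample of size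
    r = ⌈γ·n^{1−δ}·ln n⌉ chosen uniformly with replacement, the estimation
    ρ = (n/r)·Σ_l ρ_{R_l}·x_{R_l} of ρ̂ = Σ_j ρ_j x_j satisfies
    ρ̂ − α1·ρ̄ − 2α2 n^{q+δ} ≤ ρ ≤ ρ̂ + α1·ρ̄ + 2α2 n^{q+δ}, where ρ̄ = Σ_j |ρ_j|,
    with probability at least 1 − 4/n^{d+1}. -/
theorem sampling_lemma_general (n d q : ℕ) (δ β α1 α2 γ : ℝ)
    (hn : 2 ≤ n) (hδ : 0 < δ) (hδ1 : δ ≤ 1) (hd : 1 ≤ d) (hβ : 1 ≤ β)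
    (hα1 : 0 < α1) (hα1' : α1 < 1) (hα2 : 0 < α2)
    (hγ : 6 * ((d : ℝ) + 1) * ((q : ℝ) + 1) * β / (α1 ^ 2 * α2) ≤ γ)
    (x : Fin n → ℝ) (hx : ∀ i, x i = 0 ∨ x i = 1)
    (ρc : Fin n → ℝ) (hρc : ∀ j, |ρc j| ≤ ((q : ℝ) + 1) * β * (n : ℝ) ^ q)
    (r : ℕ) (hr : r = ⌈γ * (n : ℝ) ^ ((1 : ℝ) - δ) * Real.log n⌉₊) :
    (1 : ℝ) - 4 / (n : ℝ) ^ (d + 1) ≤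
      ((Finset.univ.filter fun R : Fin r → Fin n =>
          (∑ j, ρc j * x j) - α1 * (∑ j, |ρc j|)
              - 2 * α2 * (n : ℝ) ^ ((q : ℝ) + δ) ≤
            ((n : ℝ) / r) * ∑ l, ρc (R l) * x (R l) ∧
          ((n : ℝ) / r) * ∑ l, ρc (R l) * x (R l) ≤
            (∑ j, ρc j * x j) + α1 * (∑ j, |ρc j|)
              + 2 * α2 * (n : ℝ) ^ ((q : ℝ) + δ)).card : ℝ) /
        (n : ℝ) ^ r := by
  classical
  have hn0 : 0 < n := by omega
  have hn' : (0 : ℝ) < n := by exact_mod_cast hn0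
  have hlog : 0 < Real.log n := Real.log_pos (by exact_mod_cast hn)
  have hγ0 : 0 < γ := lt_of_lt_of_le (by positivity) hγ
  have hrle : γ * (n : ℝ) ^ ((1 : ℝ) - δ) * Real.log n ≤ r := by rw [hr]; exact Nat.le_ceil _
  have hr' : (0 : ℝ) < r := lt_of_lt_of_le (by positivity) hrle
  have hr0 : 0 < r := by exact_mod_cast hr'
  set M := ((q : ℝ) + 1) * β * (n : ℝ) ^ q with hM
  set U := 2 * α2 * (n : ℝ) ^ ((q : ℝ) + δ) with hU
  have hM0 : 0 < M := by positivity
  have habs : ∀ j, |ρc j * x j| ≤ |ρc j| := by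
    intro j
    rcases hx j with h | h <;> simp [h]
  have hexp : ((d : ℝ) + 1) * Real.log n ≤ r * α1 * U / (n * M) := by
    rw [le_div_iff₀ (by positivity)]
    have hpow : (n : ℝ) ^ ((1 : ℝ) - δ) * (n : ℝ) ^ ((q : ℝ) + δ) = n * (n : ℝ) ^ q := by
      rw [← Real.rpow_add hn', show (1 : ℝ) - δ + (q + δ) = 1 + q by ring,
        Real.rpow_add hn', Real.rpow_one, Real.rpow_natCast]
    have hγ' : ((d : ℝ) + 1) * (((q : ℝ) + 1) * β) ≤ 2 * γ * α1 * α2 := by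
      rw [div_le_iff₀ (by positivity)] at hγ
      have h1 : γ * (α1 ^ 2 * α2) ≤ γ * (α1 * α2) := by
        gcongr
        nlinarith
      have h2 : 0 < ((d : ℝ) + 1) * (((q : ℝ) + 1) * β) := by positivity
      nlinarith
    calc ((d : ℝ) + 1) * Real.log n * (n * M)
        = ((d : ℝ) + 1) * (((q : ℝ) + 1) * β) * (Real.log n * (n * (n : ℝ) ^ q)) := by
          rw [hM]; ring
      _ ≤ 2 * γ * α1 * α2 * (Real.log n * (n * (n : ℝ) ^ q)) := by gcongr
      _ = γ * (n : ℝ) ^ ((1 : ℝ) - δ) * Real.log n * α1 * U := by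
          rw [hU, ← hpow]; ring
      _ ≤ r * α1 * U := by gcongr
  have htail : (n : ℝ) ^ r * Real.exp (-(r * α1 * U / (n * M))) ≤
      (n : ℝ) ^ r * (1 / (n : ℝ) ^ (d + 1)) := by
    gcongr
    calc Real.exp (-(r * α1 * U / (n * M))) ≤ Real.exp (-(((d + 1 : ℕ) : ℝ) * Real.log n)) := by
          push_cast; gcongr
      _ = 1 / (n : ℝ) ^ (d + 1) := by
          rw [Real.exp_neg, Real.exp_nat_mul, Real.exp_log hn', one_div]
  let A : (Fin r → Fin n) → Prop := fun R =>
    (∑ j, ρc j * x j) - α1 * (∑ j, |ρc j|) - U ≤ ((n : ℝ) / r) * ∑ l, ρc (R l) * x (R l)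
  let B : (Fin r → Fin n) → Prop := fun R =>
    ((n : ℝ) / r) * ∑ l, ρc (R l) * x (R l) ≤
      (∑ j, ρc j * x j) + α1 * (∑ j, |ρc j|) + U
  have hupper := (card_filter_le_sample_sum_le hn0 hr0 (fun j => ρc j * x j)
    (W := ∑ j, |ρc j|) (U := U)
    hα1.le hα1'.le hM0 (fun j => (habs j).trans (hρc j))
    (Finset.sum_le_sum fun j _ => habs j) (fun R => ¬ B R)
    (fun R hR => (not_le.1 hR).le)).trans htail
  have hlower := (card_filter_le_sample_sum_le hn0 hr0 (fun j => -(ρc j * x j))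
    (W := ∑ j, |ρc j|) (U := U)
    hα1.le hα1'.le hM0 (fun j => by rw [abs_neg]; exact (habs j).trans (hρc j))
    (Finset.sum_le_sum fun j _ => by rw [abs_neg]; exact habs j) (fun R => ¬ A R)
    (fun R hR => by
      have := not_le.1 hR
      simp only [Finset.sum_neg_distrib, mul_neg]
      linarith)).trans htail
  have hcard : (n : ℝ) ^ r ≤ ((Finset.univ.filter fun R => A R ∧ B R).card : ℝ) +
      (Finset.univ.filter fun R => ¬ A R).card + (Finset.univ.filter fun R => ¬ B R).card := by
    have h : (Finset.univ : Finset (Fin r → Fin n)) ⊆ (Finset.univ.filter fun R => A R ∧ B R) ∪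
        (Finset.univ.filter fun R => ¬ A R) ∪ (Finset.univ.filter fun R => ¬ B R) := by
      intro R _
      simp only [Finset.mem_union, Finset.mem_filter, Finset.mem_univ, true_and]
      tauto
    have h' := (Finset.card_le_card h).trans ((Finset.card_union_le _ _).trans
      (Nat.add_le_add_right (Finset.card_union_le _ _) _))
    rw [Finset.card_univ, Fintype.card_fun, Fintype.card_fin, Fintype.card_fin] at h'
    exact_mod_cast h'
  rw [le_div_iff₀ (by positivity)]
  have hpos : 0 < (n : ℝ) ^ r * (1 / (n : ℝ) ^ (d + 1)) := by positivity
  have hsplit : (1 - 4 / (n : ℝ) ^ (d + 1)) * (n : ℝ) ^ r =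
      (n : ℝ) ^ r - 4 * ((n : ℝ) ^ r * (1 / (n : ℝ) ^ (d + 1))) := by ring
  rw [hsplit]
  have hgoal : (n : ℝ) ^ r - 4 * ((n : ℝ) ^ r * (1 / (n : ℝ) ^ (d + 1))) ≤
      ((Finset.univ.filter fun R => A R ∧ B R).card : ℝ) := by linarith
  convert hgoal
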